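/- For every n ≥ 0, the nim-value of graph chomp on the complete graph K_n on n vertices is the residue of n modulo 3: g(K_n) = n mod 3. -/

import Mathlib

/-!
The proof rests on a symmetry principle for subset take-away (`grundy_eq_grundy_fixed`): if an
involution `τ` of the ground set preserves `Δ`, and every member of `Δ` that is mapped to itself is
fixed pointwise, then `Δ` has the same nim-value as its subfamily of pointwise fixed members.
A move on a fixed set is matched by the same move in the fixed subfamily, while a move on a
non-fixed `σ` can be answered by `τ σ`, which restores the symmetry without touching the fixed part.

In `K_n`, deleting a vertex leaves `K_{n-1}`. Deleting the edge `uv` leaves a graph to which the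
principle applies with `τ` the transposition of `u` and `v`; its fixed part is `K_{n-2}`. By
induction, `g(K_n)` is therefore the minimal excludant of the residues of `n - 1` and `n - 2`
modulo 3, which is `n mod 3` (with the evident changes for `n < 2`).
-/

attribute [local instance] Classical.propDecidable

/-- The minimal excludant of a finite set of naturals. -/
noncomputable def mex (s : Finset ℕ) : ℕ := sInf {n : ℕ | n ∉ s}

/-- The position resulting from choosing `σ` in subset take-away:
remove `σ` together with every element containing it. -/
noncomputable def takeawayMove {V : Type*} [DecidableEq V] (Δ : Finset (Finset V))
    (σ : Finset V) : Finset (Finset V) :=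
  Δ.filter (fun t => ¬ σ ⊆ t)

/-- The Grundy (nim-)value of subset take-away played on `Δ`: the minimal excludant of the
Grundy values of all positions reachable in one move. -/
noncomputable def grundy {V : Type*} [DecidableEq V] (Δ : Finset (Finset V)) : ℕ :=
  mex (Δ.attach.image (fun σ => grundy (takeawayMove Δ σ.1)))
termination_by Δ.card
decreasing_by
  simp only [takeawayMove]
  exact Finset.card_lt_card (Finset.filter_ssubset.mpr ⟨σ.1, σ.2, by simp⟩)

/-- The simplicial complex of vertices and edges of a finite simple graph `G`.
Graph chomp on `G` is subset take-away on this complex, so the nim-value of graph chomp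
on `G` is `grundy (graphComplex G)`. -/
noncomputable def graphComplex {V : Type*} [Fintype V] [DecidableEq V] (G : SimpleGraph V) :
    Finset (Finset V) :=
  (Finset.univ : Finset V).image (fun v => ({v} : Finset V)) ∪
    Finset.univ.filter (fun s : Finset V => ∃ u v, G.Adj u v ∧ s = {u, v})

lemma mex_notMem (s : Finset ℕ) : mex s ∉ s := by
  have h : {n : ℕ | n ∉ s}.Nonempty := Infinite.exists_notMem_finset s
  exact Nat.sInf_mem h

lemma mem_of_lt_mex {s : Finset ℕ} {m : ℕ} (h : m < mex s) : m ∈ s := by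
  by_contra hm
  exact absurd (Nat.sInf_le (s := {n : ℕ | n ∉ s}) hm) (not_le.mpr h)

lemma mex_eq {s : Finset ℕ} {n : ℕ} (h1 : n ∉ s) (h2 : ∀ m < n, m ∈ s) : mex s = n := by
  rcases lt_trichotomy (mex s) n with h | h | h
  · exact absurd (h2 _ h) (mex_notMem s)
  · exact h
  · exact absurd (mem_of_lt_mex h) h1

section
variable {V : Type*} [DecidableEq V]

lemma grundy_move_ne {Δ : Finset (Finset V)} {σ : Finset V} (hσ : σ ∈ Δ) :
    grundy (takeawayMove Δ σ) ≠ grundy Δ := by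
  intro h
  have hn := mex_notMem (Δ.attach.image (fun σ => grundy (takeawayMove Δ σ.1)))
  rw [← grundy, ← h] at hn
  exact hn (Finset.mem_image.mpr ⟨⟨σ, hσ⟩, Finset.mem_attach _ _, rfl⟩)

lemma exists_move_of_lt_grundy {Δ : Finset (Finset V)} {m : ℕ} (h : m < grundy Δ) :
    ∃ σ ∈ Δ, grundy (takeawayMove Δ σ) = m := by
  rw [grundy] at h
  obtain ⟨σ, -, hσ⟩ := Finset.mem_image.mp (mem_of_lt_mex h)
  exact ⟨σ.1, σ.2, hσ⟩

lemma grundy_eq {Δ : Finset (Finset V)} {n : ℕ}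
    (h1 : ∀ σ ∈ Δ, grundy (takeawayMove Δ σ) ≠ n)
    (h2 : ∀ m < n, ∃ σ ∈ Δ, grundy (takeawayMove Δ σ) = m) : grundy Δ = n := by
  rw [grundy]
  refine mex_eq ?_ ?_
  · intro h
    obtain ⟨σ, -, hσ⟩ := Finset.mem_image.mp h
    exact h1 σ.1 σ.2 hσ
  · intro m hm
    obtain ⟨σ, hσ, h⟩ := h2 m hm
    exact Finset.mem_image.mpr ⟨⟨σ, hσ⟩, Finset.mem_attach _ _, h⟩

lemma mem_takeawayMove {Δ : Finset (Finset V)} {σ t : Finset V} :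
    t ∈ takeawayMove Δ σ ↔ t ∈ Δ ∧ ¬ σ ⊆ t := by
  simp [takeawayMove]

lemma card_takeawayMove_lt {Δ : Finset (Finset V)} {σ : Finset V} (hσ : σ ∈ Δ) :
    (takeawayMove Δ σ).card < Δ.card := by
  refine Finset.card_lt_card ⟨fun t ht => (mem_takeawayMove.mp ht).1, fun h => ?_⟩
  exact (mem_takeawayMove.mp (h hσ)).2 subset_rfl

/-- Symmetry principle: when an involution `τ` preserves `Δ` and fixes pointwise every member of
`Δ` that it maps to itself, `Δ` and its subfamily `F` of pointwise fixed members have equal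
nim-values. -/
theorem grundy_eq_grundy_fixed (τ : Equiv.Perm V) (hτ : ∀ v, τ (τ v) = v)
    (Δ F : Finset (Finset V))
    (hinv : ∀ t ∈ Δ, t.map τ.toEmbedding ∈ Δ)
    (hfix : ∀ t ∈ Δ, t.map τ.toEmbedding = t → ∀ v ∈ t, τ v = v)
    (hF : ∀ t, t ∈ F ↔ t ∈ Δ ∧ ∀ v ∈ t, τ v = v) :
    grundy Δ = grundy F := by
  induction hk : Δ.card using Nat.strong_induction_on generalizing Δ F with
  | _ k ih =>
  subst hk
  have hττ : ∀ t : Finset V, (t.map τ.toEmbedding).map τ.toEmbedding = t := by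
    intro t
    ext v
    rw [Finset.mem_map_equiv, Finset.mem_map_equiv,
      show τ.symm (τ.symm v) = v by rw [Equiv.symm_apply_eq, Equiv.symm_apply_eq, hτ]]
  have hpt : ∀ t : Finset V, (∀ v ∈ t, τ v = v) → t.map τ.toEmbedding = t := by
    intro t ht
    refine Finset.eq_of_subset_of_card_le ?_ (by simp)
    intro v hv
    obtain ⟨w, hw, rfl⟩ := Finset.mem_map.mp hv
    simpa [ht w hw] using hw
  have hsub : ∀ s t : Finset V, s ⊆ t.map τ.toEmbedding ↔ s.map τ.toEmbedding ⊆ t := by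
    intro s t
    rw [← Finset.map_subset_map (f := τ.toEmbedding), hττ]
  -- A move on a fixed set is the same move in the fixed subfamily.
  have hfixed : ∀ σ ∈ F, grundy (takeawayMove Δ σ) = grundy (takeawayMove F σ) := by
    intro σ hσ
    obtain ⟨hσΔ, hσf⟩ := (hF σ).mp hσ
    refine ih _ (card_takeawayMove_lt hσΔ) _ _ ?_ ?_ ?_ rfl
    · intro t ht
      rw [mem_takeawayMove] at ht ⊢
      rw [hsub, hpt σ hσf]
      exact ⟨hinv t ht.1, ht.2⟩
    · intro t ht
      exact hfix t (mem_takeawayMove.mp ht).1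
    · intro t
      rw [mem_takeawayMove, mem_takeawayMove, hF]
      tauto
  refine grundy_eq ?_ ?_
  · intro σ hσ
    by_cases hσf : ∀ v ∈ σ, τ v = v
    · have hσF := (hF σ).mpr ⟨hσ, hσf⟩
      rw [hfixed σ hσF]
      exact grundy_move_ne hσF
    · -- Otherwise the reply `τ σ` reaches a symmetric position with fixed part still `F`.
      have hmem : σ.map τ.toEmbedding ∈ takeawayMove Δ σ := by
        refine mem_takeawayMove.mpr ⟨hinv σ hσ, fun h => hσf (hfix σ hσ ?_)⟩
        exact (Finset.eq_of_subset_of_card_le h (by simp)).symm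
      have hrep : grundy (takeawayMove (takeawayMove Δ σ) (σ.map τ.toEmbedding)) = grundy F := by
        refine ih _ ((card_takeawayMove_lt hmem).trans (card_takeawayMove_lt hσ)) _ _ ?_ ?_ ?_ rfl
        · intro t ht
          rw [mem_takeawayMove, mem_takeawayMove] at ht ⊢
          rw [hsub, hsub, hττ]
          exact ⟨⟨hinv t ht.1.1, ht.2⟩, ht.1.2⟩
        · intro t ht
          exact hfix t (mem_takeawayMove.mp (mem_takeawayMove.mp ht).1).1
        · intro t
          rw [mem_takeawayMove, mem_takeawayMove, hF]
          constructor
          · rintro ⟨h, htf⟩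
            refine ⟨⟨⟨h, fun hs => hσf fun v hv => htf v (hs hv)⟩, fun hs => hσf ?_⟩, htf⟩
            rw [← hsub, hpt t htf] at hs
            exact fun v hv => htf v (hs hv)
          · rintro ⟨⟨⟨h, -⟩, -⟩, htf⟩
            exact ⟨h, htf⟩
      rw [← hrep]
      exact (grundy_move_ne hmem).symm
  · intro m hm
    obtain ⟨σ, hσ, h⟩ := exists_move_of_lt_grundy hm
    exact ⟨σ, ((hF σ).mp hσ).1, (hfixed σ hσ).trans h⟩

/-- The complex of vertices and edges of the complete graph on the vertex set `S`. -/
def completeComplex (S : Finset V) : Finset (Finset V) :=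
  S.powersetCard 1 ∪ S.powersetCard 2

lemma mem_completeComplex {S t : Finset V} :
    t ∈ completeComplex S ↔ t ⊆ S ∧ (t.card = 1 ∨ t.card = 2) := by
  simp only [completeComplex, Finset.mem_union, Finset.mem_powersetCard]
  tauto

lemma takeawayMove_vertex (S : Finset V) (v : V) :
    takeawayMove (completeComplex S) {v} = completeComplex (S.erase v) := by
  ext t
  rw [mem_takeawayMove, mem_completeComplex, mem_completeComplex, Finset.subset_erase,
    Finset.singleton_subset_iff]
  tauto

lemma grundy_takeawayMove_edge (S : Finset V) {u v : V} (hu : u ∈ S) (hv : v ∈ S) (huv : u ≠ v) :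
    grundy (takeawayMove (completeComplex S) {u, v}) =
      grundy (completeComplex ((S.erase u).erase v)) := by
  have hmap : ∀ t : Finset V, ∀ w, w ∈ t.map (Equiv.swap u v).toEmbedding ↔
      Equiv.swap u v w ∈ t := by
    intro t w
    rw [Finset.mem_map_equiv, Equiv.symm_swap]
  refine grundy_eq_grundy_fixed (Equiv.swap u v) (Equiv.swap_apply_self u v) _ _ ?_ ?_ ?_
  · intro t ht
    rw [mem_takeawayMove, mem_completeComplex] at ht ⊢
    obtain ⟨⟨h1, h2⟩, h3⟩ := ht
    refine ⟨⟨?_, by simpa using h2⟩, fun h => h3 ?_⟩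
    · intro w hw
      rw [hmap] at hw
      have := h1 hw
      rcases eq_or_ne w u with rfl | hwu
      · exact hu
      rcases eq_or_ne w v with rfl | hwv
      · exact hv
      rwa [Equiv.swap_apply_of_ne_of_ne hwu hwv] at this
    · simp only [Finset.insert_subset_iff, Finset.singleton_subset_iff, hmap,
        Equiv.swap_apply_left, Equiv.swap_apply_right] at h ⊢
      exact h.symm
  · -- An invariant set meeting `{u, v}` contains it, so it was removed by the move.
    intro t ht hinv w hw
    have h3 := (mem_takeawayMove.mp ht).2
    have hw' := (hmap t w).mp (hinv.symm ▸ hw)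
    refine Equiv.swap_apply_of_ne_of_ne ?_ ?_
    · rintro rfl
      rw [Equiv.swap_apply_left] at hw'
      exact h3 (by simp [Finset.insert_subset_iff, hw, hw'])
    · rintro rfl
      rw [Equiv.swap_apply_right] at hw'
      exact h3 (by simp [Finset.insert_subset_iff, hw, hw'])
  · intro t
    rw [mem_takeawayMove, mem_completeComplex, mem_completeComplex, Finset.subset_erase,
      Finset.subset_erase]
    constructor
    · rintro ⟨⟨⟨h1, h2⟩, h3⟩, h4⟩
      refine ⟨⟨⟨h1, h4⟩, fun h => h2 (h (by simp))⟩, fun w hw => ?_⟩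
      refine Equiv.swap_apply_of_ne_of_ne ?_ ?_
      · rintro rfl
        exact h2 hw
      · rintro rfl
        exact h3 hw
    · rintro ⟨⟨⟨h1, h4⟩, -⟩, h⟩
      refine ⟨⟨⟨h1, fun hut => huv ?_⟩, fun hvt => huv ?_⟩, h4⟩
      · simpa using (h u hut).symm
      · simpa using h v hvt

theorem grundy_completeComplex (S : Finset V) : grundy (completeComplex S) = S.card % 3 := by
  induction hk : S.card using Nat.strong_induction_on generalizing S with
  | _ k ih =>
  subst hk
  have hvertex : ∀ v ∈ S,
      grundy (takeawayMove (completeComplex S) {v}) = (S.card - 1) % 3 := by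
    intro v hv
    rw [takeawayMove_vertex, ih _ (Finset.card_erase_lt_of_mem hv) _ rfl,
      Finset.card_erase_of_mem hv]
  have hedge : ∀ u ∈ S, ∀ v ∈ S, u ≠ v →
      grundy (takeawayMove (completeComplex S) {u, v}) = (S.card - 2) % 3 := by
    intro u hu v hv huv
    have hv' : v ∈ S.erase u := Finset.mem_erase.mpr ⟨huv.symm, hv⟩
    rw [grundy_takeawayMove_edge S hu hv huv, ih _ ((Finset.card_erase_lt_of_mem hv').trans
      (Finset.card_erase_lt_of_mem hu)) _ rfl, Finset.card_erase_of_mem hv',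
      Finset.card_erase_of_mem hu, Nat.sub_sub]
  refine grundy_eq ?_ ?_
  · intro σ hσ
    obtain ⟨hsub, h | h⟩ := mem_completeComplex.mp hσ
    · obtain ⟨v, rfl⟩ := Finset.card_eq_one.mp h
      have hv : v ∈ S := hsub (by simp)
      have hpos := Finset.card_pos.mpr ⟨v, hv⟩
      rw [hvertex v hv]
      omega
    · have hle := Finset.card_le_card hsub
      obtain ⟨u, v, huv, rfl⟩ := Finset.card_eq_two.mp h
      rw [hedge u (hsub (by simp)) v (hsub (by simp)) huv]
      omega
  · intro m hm
    have hpos : 0 < S.card := by omega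
    -- A smaller value is the residue of `n - 1`, or else of `n - 2`; the latter needs `2 ≤ n`.
    by_cases hm1 : m = (S.card - 1) % 3
    · obtain ⟨v, hv⟩ := Finset.card_pos.mp hpos
      refine ⟨{v}, mem_completeComplex.mpr ⟨by simpa using hv, by simp⟩, ?_⟩
      rw [hvertex v hv, hm1]
    · obtain ⟨u, hu, v, hv, huv⟩ := Finset.one_lt_card.mp (show 1 < S.card by omega)
      refine ⟨{u, v}, mem_completeComplex.mpr
        ⟨by simp [Finset.insert_subset_iff, hu, hv], Or.inr (Finset.card_pair huv)⟩, ?_⟩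
      rw [hedge u hu v hv huv]
      omega

lemma graphComplex_top [Fintype V] :
    graphComplex (⊤ : SimpleGraph V) = completeComplex Finset.univ := by
  ext t
  simp only [graphComplex, mem_completeComplex, Finset.mem_union, Finset.mem_image,
    Finset.mem_filter, Finset.mem_univ, true_and, SimpleGraph.top_adj, Finset.subset_univ,
    Finset.card_eq_one, Finset.card_eq_two, eq_comm]

end

/-- The nim-value of graph chomp on the complete graph `K_n` is `n mod 3`. -/
theorem grundy_completeGraph (n : ℕ) :
    grundy (graphComplex (⊤ : SimpleGraph (Fin n))) = n % 3 := by
  rw [graphComplex_top, grundy_completeComplex, Finset.card_univ, Fintype.card_fin]
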